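/- Let Γ be an uncountable index set and ℓ¹(Γ) the Banach space of functions x : Γ → ℝ with countable support and Σ_{α∈Γ} |x_α| < ∞, normed by ‖x‖ = Σ_α |x_α|. Then ℓ¹(Γ) has the Lebesgue property: every Riemann integrable function f : [a,b] → ℓ¹(Γ) is continuous almost everywhere on [a,b]. -/

import Mathlib

open Set MeasureTheory

/-- A tagged partition of `[a,b]`: points `a = t 0 < t 1 < ⋯ < t n = b`
with tags `s i ∈ [t i, t (i+1)]`. -/
structure TaggedPartition (a b : ℝ) where
  n : ℕ
  t : ℕ → ℝ
  s : ℕ → ℝ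
  npos : 0 < n
  left : t 0 = a
  right : t n = b
  mono : ∀ i < n, t i < t (i + 1)
  tag_mem : ∀ i < n, s i ∈ Set.Icc (t i) (t (i + 1))

/-- The mesh of the partition is `< δ`. -/
def TaggedPartition.MeshLT {a b : ℝ} (P : TaggedPartition a b) (δ : ℝ) : Prop :=
  ∀ i < P.n, P.t (i + 1) - P.t i < δ

/-- The set of partition points of a tagged partition. -/
def TaggedPartition.points {a b : ℝ} (P : TaggedPartition a b) : Set ℝ :=
  {x | ∃ i ≤ P.n, P.t i = x}

/-- The Riemann sum `f(Δ) = Σᵢ (tᵢ₊₁ - tᵢ) • f(sᵢ)`. -/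
def riemannSum {X : Type*} [AddCommGroup X] [Module ℝ X]
    (f : ℝ → X) {a b : ℝ} (P : TaggedPartition a b) : X :=
  ∑ i ∈ Finset.range P.n, (P.t (i + 1) - P.t i) • f (P.s i)

/-- `f` has Riemann integral `x` on `[a,b]` (mesh-based definition, metric `dist`). -/
def HasRiemannIntegral {X : Type*} [MetricSpace X] [AddCommGroup X] [Module ℝ X]
    (f : ℝ → X) (a b : ℝ) (x : X) : Prop :=
  ∀ ε > 0, ∃ δ > 0, ∀ P : TaggedPartition a b, P.MeshLT δ →
    dist (riemannSum f P) x < ε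

/-- A metric vector space `Z` has the Lebesgue property: every Riemann
integrable function `[a,b] → Z` is continuous almost everywhere. -/
def LebesgueProperty (Z : Type*) [MetricSpace Z] [AddCommGroup Z] [Module ℝ Z] : Prop :=
  ∀ (a b : ℝ), a < b → ∀ f : ℝ → Z, (∃ x, HasRiemannIntegral f a b x) →
    volume {t ∈ Set.Icc a b | ¬ ContinuousWithinAt f (Set.Icc a b) t} = 0

/-!
Write `h` for the mesh of a uniform grid, and suppose that for every vector `S`, near almost every
point of `D`, there are values `f s`, `f s'` with `‖S + (f s - f s')‖ ≥ ‖S‖ + c`. Choosing tags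
cell by cell in the cells that meet `D` in positive measure, one obtains two Riemann sums whose
difference has norm at least `h * #cells * c ≥ |D| * c`. Riemann integrability makes this
difference arbitrarily small, so `D` is null.

Let `D` be the set of points where `f` jumps by at least `c`. For real-valued `f` a jump, added to
`S` with the right sign, increases the absolute value. In `ℓ¹` either sign will do: the vector
`S` is carried, up to a small error, by finitely many coordinates `F`; by the Lebesgue property of
the coordinate spaces, at almost every point the jump of `f` has small mass on `F`, hence is almost
disjoint from `S`, and for disjointly supported vectors the `ℓ¹` norm is additive.
-/

open Filter Topology

section JumpsAndGains

variable {α X : Type*} [TopologicalSpace α]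

/-- The points `t` of `K` at which `f` oscillates by at least `c` along `K`: the values at points
of `K` arbitrarily near `t` are compared with `f t` itself rather than with each other. -/
def jumpSet [PseudoMetricSpace X] (f : α → X) (K : Set α) (c : ℝ) : Set α :=
  {t ∈ K | ∃ᶠ s in 𝓝[K] t, c ≤ dist (f s) (f t)}

/-- The points arbitrarily near which a difference of two values of `f` can be added to `S` so as
to increase its norm by at least `c`. -/
def normGainSet [SeminormedAddCommGroup X] (f : α → X) (c : ℝ) (S : X) : Set α :=
  {t | ∃ᶠ p : α × α in 𝓝 (t, t), ‖S‖ + c ≤ ‖S + (f p.1 - f p.2)‖}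

lemma measure_discontinuities_eq_zero [PseudoMetricSpace X] [MeasurableSpace α] {μ : Measure α}
    {f : α → X} {K : Set α} (h : ∀ c > 0, μ (jumpSet f K c) = 0) :
    μ {t ∈ K | ¬ ContinuousWithinAt f K t} = 0 := by
  have subset_iUnion : {t ∈ K | ¬ ContinuousWithinAt f K t} ⊆
      ⋃ k : ℕ, jumpSet f K (1 / ((k : ℝ) + 1)) := by
    rintro t ⟨htK, ht⟩
    simp only [ContinuousWithinAt, Metric.tendsto_nhds, not_forall] at ht
    obtain ⟨ε, hε, hjump⟩ := ht
    obtain ⟨k, hk⟩ := exists_nat_one_div_lt hε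
    exact mem_iUnion.2 ⟨k, htK,
      (not_eventually.1 hjump).mono fun s hs => hk.le.trans (not_lt.1 hs)⟩
  exact measure_mono_null subset_iUnion (measure_iUnion_null fun k => h _ (by positivity))

lemma exists_normGain_of_measure_ne_zero [SeminormedAddCommGroup X] [MeasurableSpace α]
    {μ : Measure α} {f : α → X} {c : ℝ} {S : X} {D U : Set α}
    (hgain : D ≤ᵐ[μ] normGainSet f c S) (hU : IsOpen U) (hDU : μ (D ∩ U) ≠ 0) :
    ∃ p ∈ U ×ˢ U, ‖S‖ + c ≤ ‖S + (f p.1 - f p.2)‖ := by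
  have hne : μ (normGainSet f c S ∩ U) ≠ 0 := fun h0 =>
    hDU (measure_mono_null_ae (hgain.inter (EventuallyLE.refl _ U)) h0)
  obtain ⟨t, ht, htU⟩ := nonempty_of_measure_ne_zero hne
  obtain ⟨p, hp, hpU⟩ := (ht.and_eventually ((hU.prod hU).mem_nhds ⟨htU, htU⟩)).exists
  exact ⟨p, hpU, hp⟩

lemma exists_card_mul_le_norm_sum_sub [SeminormedAddCommGroup X] [MeasurableSpace α] [Nonempty α]
    {μ : Measure α} {f : α → X} {c : ℝ} {D : Set α} (hgain : ∀ S, D ≤ᵐ[μ] normGainSet f c S)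
    {ι : Type*} {U : ι → Set α} (hU : ∀ i, IsOpen (U i)) (G : Finset ι)
    (hG : ∀ i ∈ G, μ (D ∩ U i) ≠ 0) :
    ∃ p : ι → α × α, (∀ i ∈ G, p i ∈ U i ×ˢ U i) ∧
      G.card * c ≤ ‖∑ i ∈ G, (f (p i).1 - f (p i).2)‖ := by
  classical
  induction G using Finset.induction_on with
  | empty => exact ⟨fun _ => Classical.arbitrary _, by simp⟩
  | insert j G hj ih =>
    obtain ⟨p, hpU, hp⟩ := ih fun i hi => hG i (Finset.mem_insert_of_mem hi)
    obtain ⟨q, hqU, hq⟩ := exists_normGain_of_measure_ne_zero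
      (hgain (∑ i ∈ G, (f (p i).1 - f (p i).2))) (hU j) (hG j (Finset.mem_insert_self j G))
    have update_eq : ∀ i ∈ G, Function.update p j q i = p i := fun i hi =>
      Function.update_of_ne (ne_of_mem_of_not_mem hi hj) _ _
    refine ⟨Function.update p j q, ?_, ?_⟩
    · intro i hi
      rcases Finset.mem_insert.1 hi with rfl | hiG
      · simpa using hqU
      · simpa only [update_eq i hiG] using hpU i hiG
    · rw [Finset.sum_insert hj, Finset.card_insert_of_notMem hj, Function.update_self,
        Finset.sum_congr rfl fun i hi => by rw [update_eq i hi], add_comm (f q.1 - f q.2)]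
      push_cast
      linarith

lemma mem_normGainSet_of_frequently [SeminormedAddCommGroup X] {f : α → X} {K : Set α} {c : ℝ}
    {S : X} {t : α} (h : ∃ᶠ s in 𝓝[K] t, ‖S‖ + c ≤ ‖S + (f s - f t)‖) :
    t ∈ normGainSet f c S :=
  ((tendsto_id'.2 nhdsWithin_le_nhds).prodMk_nhds tendsto_const_nhds).frequently h

lemma mem_normGainSet_of_frequently_swap [SeminormedAddCommGroup X] {f : α → X} {K : Set α}
    {c : ℝ} {S : X} {t : α} (h : ∃ᶠ s in 𝓝[K] t, ‖S‖ + c ≤ ‖S + (f t - f s)‖) :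
    t ∈ normGainSet f c S :=
  (tendsto_const_nhds.prodMk_nhds (tendsto_id'.2 nhdsWithin_le_nhds)).frequently h

end JumpsAndGains

section UniformGrid

/-- The `i`-th point of the division of `[a, b]` into `n` intervals of equal length. -/
noncomputable def uniformGrid (a b : ℝ) (n i : ℕ) : ℝ := a + i * ((b - a) / n)

variable {a b : ℝ} {n : ℕ}

lemma uniformGrid_zero (a b : ℝ) (n : ℕ) : uniformGrid a b n 0 = a := by
  simp [uniformGrid]

lemma uniformGrid_self (a b : ℝ) (hn : 0 < n) : uniformGrid a b n n = b := by
  have : (n : ℝ) ≠ 0 := by positivity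
  rw [uniformGrid, mul_div_cancel₀ _ this, add_sub_cancel]

lemma uniformGrid_succ_sub (a b : ℝ) (n i : ℕ) :
    uniformGrid a b n (i + 1) - uniformGrid a b n i = (b - a) / n := by
  simp only [uniformGrid]
  push_cast
  ring

lemma strictMono_uniformGrid (hab : a < b) (hn : 0 < n) : StrictMono (uniformGrid a b n) :=
  strictMono_nat_of_lt_succ fun i => by
    have : 0 < (b - a) / n := div_pos (sub_pos.2 hab) (by positivity)
    linarith [uniformGrid_succ_sub a b n i]

lemma measure_le_sum_measure_Ioo {α : Type*} [LinearOrder α] [MeasurableSpace α]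
    {μ : Measure α} [NullSingletonClass μ] {t : ℕ → α} (ht : Monotone t) {n : ℕ} {D : Set α}
    (hD : D ⊆ Icc (t 0) (t n)) :
    μ D ≤ ∑ i ∈ Finset.range n with μ (D ∩ Ioo (t i) (t (i + 1))) ≠ 0,
      μ (Ioo (t i) (t (i + 1))) := by
  have cover : D ∩ Ioc (t 0) (t n) ⊆ ⋃ i ∈ Finset.range n, D ∩ Ioc (t i) (t (i + 1)) := by
    rw [← ht.biUnion_Ico_Ioc_map_succ, inter_iUnion₂]
    simp
  calc μ D = μ (D ∩ Icc (t 0) (t n)) := by rw [inter_eq_self_of_subset_left hD]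
    _ = μ (D ∩ Ioc (t 0) (t n)) := measure_congr ((ae_eq_refl D).inter Ioc_ae_eq_Icc.symm)
    _ ≤ ∑ i ∈ Finset.range n, μ (D ∩ Ioc (t i) (t (i + 1))) :=
      (measure_mono cover).trans (measure_biUnion_finset_le _ _)
    _ = ∑ i ∈ Finset.range n, μ (D ∩ Ioo (t i) (t (i + 1))) :=
      Finset.sum_congr rfl fun i _ => measure_congr ((ae_eq_refl D).inter Ioo_ae_eq_Ioc.symm)
    _ = ∑ i ∈ Finset.range n with μ (D ∩ Ioo (t i) (t (i + 1))) ≠ 0,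
        μ (D ∩ Ioo (t i) (t (i + 1))) := (Finset.sum_filter_ne_zero _).symm
    _ ≤ _ := Finset.sum_le_sum fun i _ => measure_mono inter_subset_right

/-- The tagged partition of `[a, b]` into `n` intervals of equal length with tags `s`. -/
noncomputable def TaggedPartition.uniform (hab : a < b) (hn : 0 < n) (s : ℕ → ℝ)
    (hs : ∀ i < n, s i ∈ Icc (uniformGrid a b n i) (uniformGrid a b n (i + 1))) :
    TaggedPartition a b where
  n := n
  t := uniformGrid a b n
  s := s
  npos := hn
  left := uniformGrid_zero a b n
  right := uniformGrid_self a b hn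
  mono i _ := strictMono_uniformGrid hab hn i.lt_succ_self
  tag_mem := hs

lemma riemannSum_uniform {X : Type*} [AddCommGroup X] [Module ℝ X] (f : ℝ → X) (hab : a < b)
    (hn : 0 < n) (s : ℕ → ℝ)
    (hs : ∀ i < n, s i ∈ Icc (uniformGrid a b n i) (uniformGrid a b n (i + 1))) :
    riemannSum f (TaggedPartition.uniform hab hn s hs) =
      ((b - a) / n) • ∑ i ∈ Finset.range n, f (s i) := by
  simp only [riemannSum, TaggedPartition.uniform, uniformGrid_succ_sub, Finset.smul_sum]

end UniformGrid

namespace HasRiemannIntegral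

variable {X Y : Type*} {a b : ℝ}

lemma map [MetricSpace X] [AddCommGroup X] [Module ℝ X] [MetricSpace Y] [AddCommGroup Y]
    [Module ℝ Y] {f : ℝ → X} {x : X} (hf : HasRiemannIntegral f a b x) (L : X →L[ℝ] Y) :
    HasRiemannIntegral (fun s => L (f s)) a b (L x) := by
  intro ε hε
  obtain ⟨η, hη, hL⟩ := Metric.continuousAt_iff.1 L.continuous.continuousAt ε hε
  obtain ⟨δ, hδ, hsum⟩ := hf η hη
  refine ⟨δ, hδ, fun P hP => ?_⟩
  have map_riemannSum : riemannSum (fun s => L (f s)) P = L (riemannSum f P) := by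
    simp only [riemannSum, map_sum, map_smul]
  rw [map_riemannSum]
  exact hL (hsum P hP)

lemma exists_dist_riemannSum_lt [MetricSpace X] [AddCommGroup X] [Module ℝ X] {f : ℝ → X} {x : X}
    (hf : HasRiemannIntegral f a b x) {ε : ℝ} (hε : 0 < ε) :
    ∃ δ > 0, ∀ P Q : TaggedPartition a b, P.MeshLT δ → Q.MeshLT δ →
      dist (riemannSum f P) (riemannSum f Q) < ε := by
  obtain ⟨δ, hδ, h⟩ := hf (ε / 2) (half_pos hε)
  exact ⟨δ, hδ, fun P Q hP hQ =>
    (dist_triangle_right _ _ x).trans_lt (by linarith [h P hP, h Q hQ])⟩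

variable [NormedAddCommGroup X] [NormedSpace ℝ X] {f : ℝ → X} {x : X}

lemma exists_uniformGrid_mul_norm_sum_sub_lt (hf : HasRiemannIntegral f a b x) (hab : a < b)
    {ε : ℝ} (hε : 0 < ε) :
    ∃ n > 0, ∀ G ⊆ Finset.range n, ∀ p : ℕ → ℝ × ℝ,
      (∀ i ∈ G, p i ∈ Icc (uniformGrid a b n i) (uniformGrid a b n (i + 1)) ×ˢ
        Icc (uniformGrid a b n i) (uniformGrid a b n (i + 1))) →
      (b - a) / n * ‖∑ i ∈ G, (f (p i).1 - f (p i).2)‖ < ε := by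
  obtain ⟨δ, hδ, hsum⟩ := hf.exists_dist_riemannSum_lt hε
  obtain ⟨n, hn⟩ := exists_nat_gt ((b - a) / δ)
  have hn0 : (0 : ℝ) < n := (div_pos (sub_pos.2 hab) hδ).trans hn
  have hnpos : 0 < n := Nat.cast_pos.1 hn0
  have mesh_lt : (b - a) / n < δ := (div_lt_comm₀ hδ hn0).1 hn
  refine ⟨n, hnpos, fun G hGn p hp => ?_⟩
  let q : ℕ → ℝ × ℝ := G.piecewise p fun i => (uniformGrid a b n i, uniformGrid a b n i)
  have hq (i : ℕ) : q i ∈ Icc (uniformGrid a b n i) (uniformGrid a b n (i + 1)) ×ˢ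
      Icc (uniformGrid a b n i) (uniformGrid a b n (i + 1)) := by
    by_cases hi : i ∈ G
    · simpa only [q, Finset.piecewise_eq_of_mem _ _ _ hi] using hp i hi
    · have := left_mem_Icc.2 (strictMono_uniformGrid hab hnpos i.lt_succ_self).le
      simpa only [q, Finset.piecewise_eq_of_notMem _ _ _ hi] using ⟨this, this⟩
  have sum_eq : ∑ i ∈ G, (f (p i).1 - f (p i).2) =
      ∑ i ∈ Finset.range n, (f (q i).1 - f (q i).2) :=
    Finset.sum_subset_zero_on_sdiff hGn
      (fun i hi => by simp [q, (Finset.mem_sdiff.1 hi).2])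
      (fun i hi => by simp only [q, Finset.piecewise_eq_of_mem _ _ _ hi])
  have hlt := hsum (.uniform hab hnpos (fun i => (q i).1) fun i _ => (hq i).1)
    (.uniform hab hnpos (fun i => (q i).2) fun i _ => (hq i).2)
    (fun i _ => (uniformGrid_succ_sub a b n i).trans_lt mesh_lt)
    (fun i _ => (uniformGrid_succ_sub a b n i).trans_lt mesh_lt)
  rwa [riemannSum_uniform, riemannSum_uniform, dist_eq_norm, ← smul_sub,
    ← Finset.sum_sub_distrib, ← sum_eq, norm_smul,
    Real.norm_of_nonneg (div_pos (sub_pos.2 hab) hn0).le] at hlt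

lemma volume_eq_zero_of_normGain (hf : HasRiemannIntegral f a b x) (hab : a < b) {D : Set ℝ}
    (hD : D ⊆ Icc a b) {c : ℝ} (hc : 0 < c) (hgain : ∀ S, D ≤ᵐ[volume] normGainSet f c S) :
    volume D = 0 := by
  by_contra hne
  have hfin : volume D ≠ ⊤ := measure_ne_top_of_subset hD measure_Icc_lt_top.ne
  have hpos : 0 < volume.real D := ENNReal.toReal_pos hne hfin
  obtain ⟨n, hn, hsmall⟩ := hf.exists_uniformGrid_mul_norm_sum_sub_lt hab (mul_pos hpos hc)
  have hmono := strictMono_uniformGrid hab hn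
  let U (i : ℕ) : Set ℝ := Ioo (uniformGrid a b n i) (uniformGrid a b n (i + 1))
  let G : Finset ℕ := {i ∈ Finset.range n | volume (D ∩ U i) ≠ 0}
  obtain ⟨p, hpU, hp⟩ := exists_card_mul_le_norm_sum_sub hgain (U := U)
    (fun _ => isOpen_Ioo) G fun i hi => (Finset.mem_filter.1 hi).2
  have mesh_nonneg : 0 ≤ (b - a) / n := div_nonneg (sub_pos.2 hab).le n.cast_nonneg
  have volume_le : volume.real D ≤ G.card * ((b - a) / n) := by
    refine ENNReal.toReal_le_of_le_ofReal (by positivity) ?_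
    have hD' : D ⊆ Icc (uniformGrid a b n 0) (uniformGrid a b n n) := by
      rwa [uniformGrid_zero, uniformGrid_self a b hn]
    refine (measure_le_sum_measure_Ioo hmono.monotone hD').trans_eq ?_
    simp only [Real.volume_Ioo, uniformGrid_succ_sub, Finset.sum_const, nsmul_eq_mul]
    rw [ENNReal.ofReal_mul (Nat.cast_nonneg _), ENNReal.ofReal_natCast]
  refine lt_irrefl (volume.real D * c) ?_
  calc volume.real D * c ≤ G.card * ((b - a) / n) * c := by gcongr
    _ = (b - a) / n * (G.card * c) := by ring
    _ ≤ (b - a) / n * ‖∑ i ∈ G, (f (p i).1 - f (p i).2)‖ := by gcongr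
    _ < volume.real D * c := hsmall G (Finset.filter_subset _ _) p fun i hi =>
      prod_mono Ioo_subset_Icc_self Ioo_subset_Icc_self (hpU i hi)

lemma volume_discontinuities_eq_zero_of_normGain (hf : HasRiemannIntegral f a b x) (hab : a < b)
    (hgain : ∀ c > 0, ∃ c' > 0, ∀ S, jumpSet f (Icc a b) c ≤ᵐ[volume] normGainSet f c' S) :
    volume {t ∈ Icc a b | ¬ ContinuousWithinAt f (Icc a b) t} = 0 :=
  measure_discontinuities_eq_zero fun c hc =>
    let ⟨_, hc', h⟩ := hgain c hc
    hf.volume_eq_zero_of_normGain hab (sep_subset _ _) hc' h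

end HasRiemannIntegral

lemma abs_add_eq_or_abs_sub_eq {R : Type*} [AddCommGroup R] [LinearOrder R]
    [IsOrderedAddMonoid R] (x y : R) : |x + y| = |x| + |y| ∨ |x - y| = |x| + |y| := by
  have abs_sub_eq_iff : |x - y| = |x| + |y| ↔ 0 ≤ x ∧ y ≤ 0 ∨ x ≤ 0 ∧ 0 ≤ y := by
    simpa [sub_eq_add_neg] using abs_add_eq_add_abs_iff x (-y)
  rw [abs_add_eq_add_abs_iff, abs_sub_eq_iff]
  rcases le_total 0 x with hx | hx <;> rcases le_total 0 y with hy | hy <;> simp [hx, hy]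

lemma jumpSet_subset_normGainSet {α : Type*} [TopologicalSpace α] (f : α → ℝ) (K : Set α) (c : ℝ)
    (S : ℝ) : jumpSet f K c ⊆ normGainSet f c S := by
  rintro t ⟨-, hjump⟩
  have add_or_sub : ∃ᶠ s in 𝓝[K] t,
      ‖S‖ + c ≤ ‖S + (f s - f t)‖ ∨ ‖S‖ + c ≤ ‖S + (f t - f s)‖ := by
    refine hjump.mono fun s hs => ?_
    rw [← neg_sub (f s), ← sub_eq_add_neg]
    have := add_le_add_right hs ‖S‖
    exact (abs_add_eq_or_abs_sub_eq S (f s - f t)).imp (fun h => this.trans_eq h.symm)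
      (fun h => this.trans_eq h.symm)
  exact (frequently_or_distrib.1 add_or_sub).elim mem_normGainSet_of_frequently
    mem_normGainSet_of_frequently_swap

lemma lebesgueProperty_real : LebesgueProperty ℝ := fun _ _ hab f ⟨_, hf⟩ =>
  hf.volume_discontinuities_eq_zero_of_normGain hab fun c hc =>
    ⟨c, hc, fun S => (jumpSet_subset_normGainSet f _ c S).eventuallyLE⟩

section L1Sum

variable {Γ : Type*} {E : Γ → Type*} [∀ γ, NormedAddCommGroup (E γ)]

lemma hasSum_norm_l1 (y : lp E 1) : HasSum (fun γ => ‖y γ‖) ‖y‖ := by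
  simpa using lp.hasSum_norm (p := 1) (by simp) y

lemma norm_add_norm_le_norm_add_l1 (S y : lp E 1) (F : Finset Γ) :
    ‖S‖ + ‖y‖ ≤ ‖S + y‖ + 2 * (∑ γ ∈ F, ‖y γ‖ + (‖S‖ - ∑ γ ∈ F, ‖S γ‖)) := by
  have tail (z : lp E 1) : HasSum (fun γ : {γ // γ ∉ F} => ‖z γ‖) (‖z‖ - ∑ γ ∈ F, ‖z γ‖) :=
    (F.hasSum_compl_iff (f := fun γ => ‖z γ‖)).2 (by
      simpa only [sub_add_cancel] using hasSum_norm_l1 z)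
  have on_F : ∑ γ ∈ F, ‖S γ‖ ≤ ∑ γ ∈ F, ‖(S + y) γ‖ + ∑ γ ∈ F, ‖y γ‖ := by
    rw [← Finset.sum_add_distrib]
    refine Finset.sum_le_sum fun γ _ => ?_
    rw [lp.coeFn_add, Pi.add_apply]
    exact norm_le_add_norm_add (S γ) (y γ)
  have off_F : ‖y‖ - ∑ γ ∈ F, ‖y γ‖ ≤
      ‖S + y‖ - ∑ γ ∈ F, ‖(S + y) γ‖ + (‖S‖ - ∑ γ ∈ F, ‖S γ‖) := by
    refine hasSum_le (fun γ => ?_) (tail y) ((tail (S + y)).add (tail S))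
    rw [lp.coeFn_add, Pi.add_apply]
    exact norm_le_add_norm_add' (S γ) (y γ)
  linarith

lemma mem_normGainSet_l1 {α : Type*} [TopologicalSpace α] {f : α → lp E 1} {K : Set α} {c : ℝ}
    (hc : 0 < c) {S : lp E 1} {F : Finset Γ} (hF : ‖S‖ - c / 8 < ∑ γ ∈ F, ‖S γ‖) {t : α}
    (ht : t ∈ jumpSet f K c) (hcont : ∀ γ ∈ F, ContinuousWithinAt (fun s => f s γ) K t) :
    t ∈ normGainSet f (c / 2) S := by
  have tendsto_zero : Tendsto (fun s => ∑ γ ∈ F, ‖(f s - f t) γ‖) (𝓝[K] t) (𝓝 0) := by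
    simpa using tendsto_finsetSum F fun γ hγ => ((hcont γ hγ).sub_const (f t γ)).norm
  have small_on_F : ∀ᶠ s in 𝓝[K] t, ∑ γ ∈ F, ‖(f s - f t) γ‖ < c / 8 :=
    tendsto_zero.eventually_lt_const (by positivity)
  refine mem_normGainSet_of_frequently ((ht.2.and_eventually small_on_F).mono ?_)
  rintro s ⟨hjump, hsmall⟩
  rw [dist_eq_norm] at hjump
  linarith [norm_add_norm_le_norm_add_l1 S (f s - f t) F]

theorem l1Gamma_lebesgueProperty_general [∀ γ, NormedSpace ℝ (E γ)]
    (hE : ∀ γ, LebesgueProperty (E γ)) : LebesgueProperty (lp E 1) := by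
  rintro a b hab f ⟨x, hf⟩
  have ae_continuous_coord (γ : Γ) :
      ∀ᵐ t, t ∈ Icc a b → ContinuousWithinAt (fun s => f s γ) (Icc a b) t := by
    simp only [ae_iff, Classical.not_imp]
    exact hE γ a b hab _ ⟨_, hf.map (lp.evalCLM ℝ E 1 γ)⟩
  refine hf.volume_discontinuities_eq_zero_of_normGain hab fun c hc =>
    ⟨c / 2, half_pos hc, fun S => ?_⟩
  obtain ⟨F, hF⟩ : ∃ F : Finset Γ, ‖S‖ - c / 8 < ∑ γ ∈ F, ‖S γ‖ :=
    ((hasSum_norm_l1 S).eventually_const_lt (by linarith)).exists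
  have ae_continuous_F : ∀ᵐ t, ∀ γ ∈ F, t ∈ Icc a b →
      ContinuousWithinAt (fun s => f s γ) (Icc a b) t :=
    (eventually_all_finset F).2 fun γ _ => ae_continuous_coord γ
  filter_upwards [ae_continuous_F] with t hcont ht
  exact mem_normGainSet_l1 hc hF ht fun γ hγ => hcont γ hγ ht.1

end L1Sum

/-- `ℓ¹(Γ)` for an uncountable index set `Γ` has the Lebesgue
property. -/
theorem l1Gamma_lebesgueProperty (Γ : Type*) [Uncountable Γ]
    [Fact (1 ≤ (1 : ENNReal))] :
    LebesgueProperty (lp (fun _ : Γ => ℝ) 1) :=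
  l1Gamma_lebesgueProperty_general fun _ => lebesgueProperty_real
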